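/- arXiv:1705.03210 — 4 statements merged into one kernel-verified Lean document; each statement's English description precedes it below -/
import Mathlib

section
/- Let G = (V,E) be a finite simple graph endowed with a weight function w : V → ℤ_{>0}, and suppose G is (r,w)-connected for some integer r ≥ 1. Let e = Σ_{v∈V} w(v) be the total weight. Then diam(G) ≤ ⌊(e-2)/r⌋ + 1. -/
/-- A set `X` of vertices *disconnects* a graph `G` if after removing `X` there remain
two vertices that are not connected by a path (this forces `|V| ≥ |X| + 2`). -/
def Disconnects {V : Type*} (G : SimpleGraph V) (X : Set V) : Prop :=
  ∃ u v : (Xᶜ : Set V), ¬ (G.induce Xᶜ).Reachable u v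

/-- `G` is `(r,w)`-connected: the removal of any set of vertices whose weights sum to
at most `r - 1` does not disconnect `G`. -/
def WeightConnected {V : Type*} (G : SimpleGraph V) (r : ℕ) (w : V → ℕ) : Prop :=
  ∀ X : Finset V, (∑ v ∈ X, w v) < r → ¬ Disconnects G (↑X : Set V)

theorem reach_inv {W : Type*} {H : SimpleGraph W} (P : W → Prop)
    (hP : ∀ a b, H.Adj a b → P a → P b) {a b : W} (h : H.Reachable a b) (ha : P a) : P b := by
  obtain ⟨p⟩ := h
  induction p with
  | nil => exact ha
  | cons hadj _ ih => exact ih (hP _ _ hadj ha)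

/-- If `G` is `(r,w)`-connected with positive weights and `r ≥ 1`,
and `e` is the total weight, then `diam G ≤ ⌊(e-2)/r⌋ + 1`. -/
theorem diam_le_of_weightConnected {V : Type*} [Fintype V] [Nonempty V]
    (G : SimpleGraph V) (w : V → ℕ) (hw : ∀ v, 0 < w v)
    (r : ℕ) (hr : 1 ≤ r) (hconn : WeightConnected G r w) :
    G.ediam ≤ (((∑ v, w v) - 2) / r + 1 : ℕ) := by
  classical
  have hreach : ∀ u v, G.Reachable u v := by
    intro u v
    by_contra hne
    refine hconn ∅ (by rw [Finset.sum_empty]; exact hr) ⟨⟨u, by simp⟩, ⟨v, by simp⟩, fun h => hne ?_⟩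
    exact reach_inv (fun x => G.Reachable u x.1)
      (fun a b hab ha => ha.trans (SimpleGraph.Adj.reachable hab)) h (SimpleGraph.Reachable.refl u)
  have hc : G.Connected := ⟨hreach⟩
  refine SimpleGraph.ediam_le_of_edist_le fun u v => ?_
  rw [← (hreach u v).coe_dist_eq_edist]
  norm_cast
  obtain hd | ⟨k, hk⟩ : G.dist u v = 0 ∨ ∃ k, G.dist u v = k + 1 := by
    cases G.dist u v <;> simp
  · rw [hd]; exact Nat.zero_le _
  rcases Nat.eq_zero_or_pos k with rfl | hk0
  · rw [hk]; exact Nat.le_add_left _ _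
  have hlayer : ∀ i, 0 < i → i < k + 1 → r ≤ ∑ x with G.dist u x = i, w x := by
    intro i hi hik
    by_contra hlt
    refine hconn _ (not_le.mp hlt) ⟨⟨u, by simp; omega⟩, ⟨v, by simp; omega⟩, fun h => ?_⟩
    have := reach_inv (fun x => G.dist u x.1 < i) (fun a b hab ha => by
      have h1 : G.Adj a.1 b.1 := hab
      have h2 := hc.dist_triangle (u := u) (v := a.1) (w := b.1)
      rw [SimpleGraph.dist_eq_one_iff_adj.mpr h1] at h2
      have h3 : G.dist u b.1 ≠ i := by simpa using b.2
      show G.dist u b.1 < i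
      omega) h (by simpa using hi)
    simp only at this
    omega
  have hpt : ∀ y, 1 ≤ ∑ x with G.dist u x = G.dist u y, w x := fun y =>
    (hw y).trans_le (Finset.single_le_sum (f := w) (fun _ _ => Nat.zero_le _) (by simp))
  have hsum : ∑ i ∈ Finset.range (k + 2), ∑ x with G.dist u x = i, w x ≤ ∑ x, w x := by
    rw [← Finset.sum_biUnion]
    · exact Finset.sum_le_sum_of_subset (Finset.subset_univ _)
    · intro i _ j _ hij
      refine Finset.disjoint_left.mpr fun x hx hy => hij ?_
      simp at hx hy
      omega
  rw [Finset.sum_range_succ, Finset.sum_range_succ'] at hsum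
  have h0 := hpt u
  have h1 := hpt v
  rw [SimpleGraph.dist_self] at h0
  rw [hk] at h1
  have hm : k * r ≤ ∑ i ∈ Finset.range k, ∑ x with G.dist u x = i + 1, w x := by
    have := Finset.card_nsmul_le_sum (Finset.range k) (fun i => ∑ x with G.dist u x = i + 1, w x) r
      (fun i hi => hlayer (i + 1) (by omega) (by have := Finset.mem_range.mp hi; omega))
    simpa using this
  have : k ≤ ((∑ x, w x) - 2) / r := (Nat.le_div_iff_mul_le hr).mpr (by omega)
  omega
end

section
/- For all integers r ≥ 1 and e ≥ r + 2, there exists a finite simple graph G on e vertices which is r-connected (equivalently, (r,𝟙)-connected for the constant weight function 𝟙 ≡ 1) and satisfies diam(G) = ⌊(e-2)/r⌋ + 1. In particular, the bound diam(G) ≤ ⌊(e-2)/r⌋ + 1 for (r,w)-connected graphs of total weight e is sharp. -/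
/-- `G` is `l`-connected: it has at least `l` vertices and cannot be disconnected by
removing `l - 1` or fewer vertices. -/
def LConnected {V : Type*} [Fintype V] (G : SimpleGraph V) (l : ℕ) : Prop :=
  l ≤ Fintype.card V ∧ ∀ X : Finset V, X.card < l → ¬ Disconnects G (↑X : Set V)

/-- The `r`-th power of the path on `e` vertices. -/
def pathPow (r e : ℕ) : SimpleGraph (Fin e) where
  Adj i j := i ≠ j ∧ i.val ≤ j.val + r ∧ j.val ≤ i.val + r
  symm := ⟨fun _ _ h => ⟨h.1.symm, h.2.2, h.2.1⟩⟩
  loopless := ⟨fun _ h => h.1 rfl⟩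

lemma pathPow_adj (r e : ℕ) {i j : Fin e} (h1 : i ≠ j) (h2 : i.val ≤ j.val + r)
    (h3 : j.val ≤ i.val + r) : (pathPow r e).Adj i j := ⟨h1, h2, h3⟩

lemma pathPow_walk_le (r e : ℕ) {u v : Fin e} (p : (pathPow r e).Walk u v) :
    v.val ≤ u.val + p.length * r := by
  induction p with
  | nil => simp
  | cons h p ih =>
    have := h.2.2
    rw [SimpleGraph.Walk.length_cons, add_mul]
    omega

lemma pathPow_exists_walk (r e : ℕ) (k : ℕ) : ∀ u v : Fin e, u.val ≤ v.val →
    v.val ≤ u.val + k * r → ∃ p : (pathPow r e).Walk u v, p.length ≤ k := by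
  induction k with
  | zero =>
    intro u v h1 h2
    have : u = v := Fin.ext (by omega)
    subst this
    exact ⟨.nil, by simp⟩
  | succ k ih =>
    intro u v h1 h2
    rw [add_mul] at h2
    by_cases huv : u = v
    · subst huv
      exact ⟨.nil, by simp⟩
    by_cases h : v.val ≤ u.val + r
    · exact ⟨.cons (pathPow_adj r e huv (by omega) h) .nil, by simp⟩
    · by_cases hr : r = 0
      · subst hr
        omega
      have hv := v.isLt
      obtain ⟨p, hp⟩ := ih ⟨u.val + r, by omega⟩ v (by simp only; omega) (by simp only; omega)
      refine ⟨.cons (v := ⟨u.val + r, by omega⟩) (pathPow_adj r e ?_ ?_ ?_) p, ?_⟩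
      · intro hh
        have := congrArg Fin.val hh
        simp only at this
        omega
      · simp only; omega
      · simp only; omega
      · rw [SimpleGraph.Walk.length_cons]; omega

lemma pathPow_reach (r e : ℕ) (X : Finset (Fin e)) (hX : X.card < r) (n : ℕ) :
    ∀ u v : ((X : Set (Fin e))ᶜ : Set (Fin e)), u.1.val ≤ v.1.val → v.1.val - u.1.val ≤ n →
      ((pathPow r e).induce (X : Set (Fin e))ᶜ).Reachable u v := by
  induction n with
  | zero =>
    intro u v h1 h2
    have : u = v := Subtype.ext (Fin.ext (by omega))
    rw [this]
  | succ n ih =>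
    intro u v h1 h2
    by_cases huv : u = v
    · rw [huv]
    by_cases h : v.1.val ≤ u.1.val + r
    · apply SimpleGraph.Adj.reachable
      exact pathPow_adj r e (i := u.1) (j := v.1) (fun hh => huv (Subtype.ext hh)) (by omega) h
    · have : ∃ w : Fin e, w ∉ X ∧ u.1.val < w.val ∧ w.val ≤ u.1.val + r := by
        by_contra hcon
        push Not at hcon
        have hv := v.1.isLt
        have hsub : Finset.Ioc u.1.val (u.1.val + r) ⊆ X.map Fin.valEmbedding := by
          intro a ha
          rw [Finset.mem_Ioc] at ha
          rw [Finset.mem_map]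
          refine ⟨⟨a, by omega⟩, ?_, rfl⟩
          by_contra hw
          have := hcon _ hw ha.1
          simp only at this
          omega
        have := Finset.card_le_card hsub
        rw [Nat.card_Ioc, Finset.card_map] at this
        omega
      obtain ⟨w, hw, h3, h4⟩ := this
      have hw' : w ∈ ((X : Set (Fin e))ᶜ : Set (Fin e)) := by simpa using hw
      refine SimpleGraph.Reachable.trans (v := ⟨w, hw'⟩) ?_
        (ih ⟨w, hw'⟩ v (by simp only; omega) (by simp only; omega))
      apply SimpleGraph.Adj.reachable
      refine pathPow_adj r e (i := u.1) (j := w) (fun hh => ?_) ?_ h4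
      · have := congrArg Fin.val hh
        omega
      · omega

/-- For all integers `r ≥ 1` and `e ≥ r + 2` there is a graph on `e`
vertices which is `r`-connected (i.e. `(r, 𝟙)`-connected for the constant weight `1`)
and whose diameter is exactly `⌊(e-2)/r⌋ + 1`; so the bound of Proposition `bound`
is sharp. -/
theorem exists_rConnected_diam_eq (r e : ℕ) (hr : 1 ≤ r) (he : r + 2 ≤ e) :
    ∃ G : SimpleGraph (Fin e), LConnected G r ∧ G.ediam = ((e - 2) / r + 1 : ℕ) := by
  have hdm := Nat.div_add_mod (e - 2) r
  have hml := Nat.mod_lt (e - 2) hr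
  rw [mul_comm] at hdm
  refine ⟨pathPow r e, ⟨by simp; omega, ?_⟩, le_antisymm ?_ ?_⟩
  · rintro X hX ⟨u, v, h⟩
    rcases le_total u.1.val v.1.val with h1 | h1
    · exact h (pathPow_reach r e X hX _ u v h1 le_rfl)
    · exact h (pathPow_reach r e X hX _ v u h1 le_rfl).symm
  · have key : ∀ u v : Fin e, u.val ≤ v.val →
        (pathPow r e).edist u v ≤ ((e - 2) / r + 1 : ℕ) := by
      intro u v h
      have hv := v.isLt
      obtain ⟨p, hp⟩ := pathPow_exists_walk r e ((e - 2) / r + 1) u v h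
        (by rw [add_mul]; omega)
      exact (SimpleGraph.Walk.edist_le p).trans (by exact_mod_cast hp)
    apply SimpleGraph.ediam_le_of_edist_le
    intro u v
    rcases le_total u.val v.val with h1 | h1
    · exact key u v h1
    · rw [SimpleGraph.edist_comm]; exact key v u h1
  · refine le_trans ?_ (SimpleGraph.edist_le_ediam (u := (⟨0, by omega⟩ : Fin e))
      (v := ⟨e - 1, by omega⟩))
    rw [SimpleGraph.edist]
    refine le_iInf fun p => ?_
    have h := pathPow_walk_le r e p
    simp only at h
    have : (e - 2) / r + 1 ≤ p.length := by
      by_contra hc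
      have h2 : p.length ≤ (e - 2) / r := by omega
      have := Nat.mul_le_mul_right r h2
      omega
    exact_mod_cast this
end

section
/- Let G be a graph on vertex set {1,…,s} with positive integer weights indexed in non-decreasing order w_1 ≤ w_2 ≤ … ≤ w_s, and suppose G is l-connected and (r,w)-connected with r ≥ l ≥ 1 and s ≥ l + 1. For each i with l+1 ≤ i ≤ s, define A_i = {1,…,k_i} where k_i is the largest integer k with i-1 ≤ k ≤ s and w_{k-i+2} + w_{k-i+3} + … + w_k ≤ r - 1, and A_i = ∅ if no such k exists. Assume A_{l+1} ≠ ∅, set h = max{ i : l+1 ≤ i ≤ s and A_i ≠ ∅ }, and b_i = s - |A_i| for i = l+1,…,h. Then diam(G) ≤ ⌊(s - 2 + Σ_{i=l+1}^{h} b_i)/h⌋ + 1. -/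
open Classical

/-- `Good s r w i k` says `i - 1 ≤ k ≤ s` and the sum of the `i - 1` weights
`w_{k-i+2} + ⋯ + w_k` is at most `r - 1`. (Here vertices are indexed `1, …, s` and the
weights are non-decreasing.) -/
def Good (s r : ℕ) (w : ℕ → ℕ) (i k : ℕ) : Prop :=
  i - 1 ≤ k ∧ k ≤ s ∧ (∑ j ∈ Finset.Icc (k + 2 - i) k, w j) ≤ r - 1

/-- `kmaxOf s r w i` is the largest `k` with `Good s r w i k` (junk value if none exists). -/
noncomputable def kmaxOf (s r : ℕ) (w : ℕ → ℕ) (i : ℕ) : ℕ :=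
  sSup {k | Good s r w i k}

/-- The set `A_i = {1, …, k_i}` where `k_i` is the largest `k` with `i-1 ≤ k ≤ s` and
`w_{k-i+2} + ⋯ + w_k ≤ r - 1`, and `A_i = ∅` if no such `k` exists. -/
noncomputable def Aset (s r : ℕ) (w : ℕ → ℕ) (i : ℕ) : Finset ℕ :=
  if ∃ k, Good s r w i k then Finset.Icc 1 (kmaxOf s r w i) else ∅

/-- `h = max { i : l+1 ≤ i ≤ s and A_i ≠ ∅ }`. -/
noncomputable def hmaxOf (s l r : ℕ) (w : ℕ → ℕ) : ℕ :=
  sSup {i | l + 1 ≤ i ∧ i ≤ s ∧ Aset s r w i ≠ ∅}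

/-- `b_i = s - |A_i|`. -/
noncomputable def bOf (s r : ℕ) (w : ℕ → ℕ) (i : ℕ) : ℕ :=
  s - (Aset s r w i).card

/-- The sum of at most `n` weights with indices in `{1, …, k}` is at most the sum of the last `n`. -/
theorem sum_le_top (s : ℕ) (w : ℕ → ℕ)
    (hwmono : ∀ j j', 1 ≤ j → j ≤ j' → j' ≤ s → w j ≤ w j') :
    ∀ (n k : ℕ) (T : Finset ℕ), k ≤ s → n ≤ k → T ⊆ Finset.Icc 1 k → T.card ≤ n →
      ∑ j ∈ T, w j ≤ ∑ j ∈ Finset.Icc (k + 1 - n) k, w j := by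
  intro n
  induction n with
  | zero =>
    intro k T _ _ _ hc
    have : T = ∅ := Finset.card_eq_zero.mp (by omega)
    simp [this]
  | succ n ih =>
    intro k T hk hn hT hc
    rcases T.eq_empty_or_nonempty with rfl | hne
    · simp
    · have htm := T.max'_mem hne
      set t := T.max' hne with ht
      have htk := Finset.mem_Icc.mp (hT htm)
      have h1 : ∑ j ∈ T.erase t, w j ≤ ∑ j ∈ Finset.Icc (k - 1 + 1 - n) (k - 1), w j := by
        apply ih (k - 1) (T.erase t) (by omega) (by omega)
        · intro x hx
          have hx1 := Finset.mem_of_mem_erase hx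
          have hx2 := Finset.ne_of_mem_erase hx
          have hx3 : x ≤ t := T.le_max' x hx1
          have hx4 := Finset.mem_Icc.mp (hT hx1)
          rw [Finset.mem_Icc]
          omega
        · rw [Finset.card_erase_of_mem htm]
          omega
      rw [← Finset.add_sum_erase T w htm]
      have h2 : Finset.Icc (k + 1 - (n + 1)) k
          = insert k (Finset.Icc (k - 1 + 1 - n) (k - 1)) := by
        ext x
        simp only [Finset.mem_Icc, Finset.mem_insert]
        omega
      rw [h2, Finset.sum_insert (by simp only [Finset.mem_Icc]; omega)]
      exact Nat.add_le_add (hwmono t k htk.1 htk.2 hk) h1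

/-- A connected graph: an interior distance layer disconnects. -/
theorem layer_disconnects {V : Type*} [Fintype V] (G : SimpleGraph V) (hG : G.Connected)
    (u v : V) (j : ℕ) (h1 : 1 ≤ j) (h2 : j < G.dist u v) :
    Disconnects G (↑(Finset.univ.filter (fun x => G.dist u x = j)) : Set V) := by
  refine ⟨⟨u, by simp; omega⟩, ⟨v, by simp; omega⟩, ?_⟩
  rintro ⟨p⟩
  have key : ∀ (a b : ((↑(Finset.univ.filter (fun x => G.dist u x = j)) : Set V)ᶜ : Set V))
      (_ : (G.induce _).Walk a b), G.dist u a.1 < j → G.dist u b.1 < j := by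
    intro a b q
    induction q with
    | nil => exact id
    | @cons a c b hadj q ih =>
      intro ha
      apply ih
      have hadj' : G.Adj a.1 c.1 := hadj
      have h3 : G.dist u c.1 ≤ G.dist u a.1 + G.dist a.1 c.1 := hG.dist_triangle
      rw [SimpleGraph.dist_eq_one_iff_adj.mpr hadj'] at h3
      have h4 : G.dist u c.1 ≠ j := by simpa using c.2
      omega
  have := key _ _ p (by simp; omega)
  simp only at this
  omega

theorem good_max (s r : ℕ) (w : ℕ → ℕ) (i : ℕ) (h : ∃ k, Good s r w i k) :
    Good s r w i (kmaxOf s r w i) :=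
  Nat.sSup_mem (s := {k | Good s r w i k}) h ⟨s, fun _ hk => hk.2.1⟩

theorem good_mono (s r : ℕ) (w : ℕ → ℕ) (i i' k : ℕ) (hi : i ≤ i') (h : Good s r w i' k) :
    Good s r w i k := by
  obtain ⟨h1, h2, h3⟩ := h
  refine ⟨by omega, h2, le_trans (Finset.sum_le_sum_of_subset ?_) h3⟩
  apply Finset.Icc_subset_Icc_left
  omega

theorem exists_good_of_ne (s r : ℕ) (w : ℕ → ℕ) (i : ℕ) (h : Aset s r w i ≠ ∅) :
    ∃ k, Good s r w i k := by
  by_contra hc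
  exact h (by simp [Aset, hc])

/-- Let `G` be a graph on the vertex set `{1, …, s}` (modelled as `Fin s`,
vertex `v` corresponding to the index `v + 1`), with positive weights `w_1 ≤ ⋯ ≤ w_s`.
If `G` is `l`-connected and `(r,w)`-connected with `r ≥ l ≥ 1`, `s ≥ l + 1`, and
`A_{l+1} ≠ ∅`, then with `h` and `b_i` as above,
`diam G ≤ ⌊(s - 2 + Σ_{i=l+1}^{h} b_i)/h⌋ + 1`. -/
theorem diam_le_of_lConnected_weightConnected
    (s l r : ℕ) (hl : 1 ≤ l) (hlr : l ≤ r) (hs : l + 1 ≤ s)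
    (w : ℕ → ℕ)
    (hwpos : ∀ j, 1 ≤ j → j ≤ s → 0 < w j)
    (hwmono : ∀ j j', 1 ≤ j → j ≤ j' → j' ≤ s → w j ≤ w j')
    (G : SimpleGraph (Fin s))
    (hGl : LConnected G l)
    (hGw : WeightConnected G r (fun v => w (v.1 + 1)))
    (hA : Aset s r w (l + 1) ≠ ∅) :
    G.ediam ≤
      ((s - 2 + ∑ i ∈ Finset.Icc (l + 1) (hmaxOf s l r w), bOf s r w i) / hmaxOf s l r w + 1 :
        ℕ) := by
  have hconn : G.Connected := by
    have : Nonempty (Fin s) := ⟨⟨0, by omega⟩⟩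
    refine ⟨fun a b => ?_⟩
    have h0 := hGl.2 ∅ (by simp; omega)
    unfold Disconnects at h0
    push Not at h0
    have h1 := h0 ⟨a, by simp⟩ ⟨b, by simp⟩
    exact h1.map (SimpleGraph.Embedding.induce _).toHom
  have hmem : hmaxOf s l r w ∈ {i | l + 1 ≤ i ∧ i ≤ s ∧ Aset s r w i ≠ ∅} :=
    Nat.sSup_mem ⟨l + 1, le_rfl, hs, hA⟩ ⟨s, fun _ hk => hk.2.1⟩
  set h := hmaxOf s l r w with hh
  obtain ⟨hlh, hhs, hAh⟩ := hmem
  have hgood : ∀ i ≤ h, ∃ k, Good s r w i k := fun i hi => by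
    obtain ⟨k, hk⟩ := exists_good_of_ne s r w h hAh
    exact ⟨k, good_mono s r w i h k hi hk⟩
  have hb : ∀ i ≤ h, bOf s r w i = s - kmaxOf s r w i := fun i hi => by
    simp [bOf, Aset, hgood i hi]
  apply SimpleGraph.ediam_le_of_edist_le
  intro u v
  rw [← (hconn u v).coe_dist_eq_edist]
  norm_cast
  set d := G.dist u v with hd
  rcases Nat.lt_or_ge d 2 with hd2 | hd2
  · exact le_trans (by omega : d ≤ 1) (Nat.le_add_left 1 _)
  suffices hsuf : (d - 1) * h ≤ s - 2 + ∑ i ∈ Finset.Icc (l + 1) h, bOf s r w i by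
    have := (Nat.le_div_iff_mul_le (by omega : 0 < h)).mpr hsuf
    omega
  -- distance layers
  let D : ℕ → Finset (Fin s) := fun j => Finset.univ.filter (fun x => G.dist u x = j)
  let B : ℕ → Finset (Fin s) := fun i => Finset.univ.filter (fun x => kmaxOf s r w i < x.1 + 1)
  have hBcard : ∀ i ≤ h, (B i).card = bOf s r w i := by
    intro i hi
    rw [hb i hi]
    have hks := (good_max s r w i (hgood i hi)).2.1
    have e : (B i).map Fin.valEmbedding = Finset.Ico (kmaxOf s r w i) s := by
      ext x
      simp only [B, Finset.mem_map, Finset.mem_filter, Finset.mem_univ, true_and,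
        Fin.valEmbedding_apply, Finset.mem_Ico]
      constructor
      · rintro ⟨y, hy, rfl⟩
        exact ⟨by omega, y.2⟩
      · rintro ⟨h1, h2⟩
        exact ⟨⟨x, h2⟩, by simp only; omega, rfl⟩
    rw [← Finset.card_map Fin.valEmbedding, e, Nat.card_Ico]
  have hDl : ∀ j ∈ Finset.Icc 1 (d - 1), l ≤ (D j).card := by
    intro j hj
    rw [Finset.mem_Icc] at hj
    by_contra hc
    exact hGl.2 (D j) (by omega) (layer_disconnects G hconn u v j hj.1 (by omega))
  have hDB : ∀ j ∈ Finset.Icc 1 (d - 1), ∀ i ∈ Finset.Icc (l + 1) h, (D j).card < i →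
      1 ≤ ((B i).filter (fun x => G.dist u x = j)).card := by
    intro j hj i hi hlt
    rw [Finset.mem_Icc] at hj hi
    by_contra hc
    have hemp : (B i).filter (fun x => G.dist u x = j) = ∅ := Finset.card_eq_zero.mp (by omega)
    obtain ⟨hg1, hg2, hg3⟩ := good_max s r w i (hgood i hi.2)
    refine hGw (D j) ?_ (layer_disconnects G hconn u v j hj.1 (by omega))
    let f : Fin s ↪ ℕ := ⟨fun x => x.1 + 1, fun a b hab => by
      apply Fin.ext; simpa using hab⟩
    have hsum := sum_le_top s w hwmono (i - 1) (kmaxOf s r w i) ((D j).map f) hg2 hg1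
      (by
        intro x hx
        rw [Finset.mem_map] at hx
        obtain ⟨y, hy, rfl⟩ := hx
        have hy' : G.dist u y = j := by simpa [D] using hy
        have hyB : y ∉ B i := fun hyB => by
          have : y ∈ (B i).filter (fun x => G.dist u x = j) :=
            Finset.mem_filter.mpr ⟨hyB, hy'⟩
          rw [hemp] at this
          simp at this
        have : ¬ (kmaxOf s r w i < y.1 + 1) := by simpa [B] using hyB
        change y.1 + 1 ∈ _
        rw [Finset.mem_Icc]
        omega)
      (by rw [Finset.card_map]; omega)
    rw [Finset.sum_map] at hsum
    have e : kmaxOf s r w i + 1 - (i - 1) = kmaxOf s r w i + 2 - i := by omega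
    rw [e] at hsum
    have hfin : ∑ x ∈ D j, w (x.1 + 1) ≤ r - 1 := le_trans hsum hg3
    exact lt_of_le_of_lt hfin (by omega)
  have hlayer : ∀ j ∈ Finset.Icc 1 (d - 1), h ≤ (D j).card +
      ∑ i ∈ Finset.Icc (l + 1) h, ((B i).filter (fun x => G.dist u x = j)).card := by
    intro j hj
    have h1 := hDl j hj
    have h2 : (Finset.Icc ((D j).card + 1) h).card ≤
        ∑ i ∈ Finset.Icc (l + 1) h, ((B i).filter (fun x => G.dist u x = j)).card := by
      rw [Finset.card_eq_sum_ones]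
      refine le_trans (Finset.sum_le_sum (g := fun i =>
        ((B i).filter (fun x => G.dist u x = j)).card) ?_)
        (Finset.sum_le_sum_of_subset (Finset.Icc_subset_Icc_left (by omega)))
      intro i hi
      rw [Finset.mem_Icc] at hi
      exact hDB j hj i (Finset.mem_Icc.mpr ⟨by omega, hi.2⟩) (by omega)
    rw [Nat.card_Icc] at h2
    omega
  have huv : u ≠ v := by
    rintro rfl
    simp at hd
    omega
  have hDsum : ∑ j ∈ Finset.Icc 1 (d - 1), (D j).card ≤ s - 2 := by
    have e : ∑ j ∈ Finset.Icc 1 (d - 1), (D j).card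
        = (Finset.univ.filter (fun x => G.dist u x ∈ Finset.Icc 1 (d - 1))).card :=
      Finset.sum_card_fiberwise_eq_card_filter _ _ _
    rw [e]
    have hsub : Finset.univ.filter (fun x => G.dist u x ∈ Finset.Icc 1 (d - 1))
        ⊆ (Finset.univ \ {u, v} : Finset (Fin s)) := by
      intro x hx
      simp only [Finset.mem_filter, Finset.mem_univ, true_and, Finset.mem_Icc] at hx
      simp only [Finset.mem_sdiff, Finset.mem_univ, true_and, Finset.mem_insert,
        Finset.mem_singleton, not_or]
      constructor
      · rintro rfl
        simp at hx
      · rintro rfl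
        omega
    refine (Finset.card_le_card hsub).trans ?_
    rw [Finset.card_sdiff_of_subset (Finset.subset_univ _), Finset.card_pair huv]
    simp
  calc (d - 1) * h = ∑ j ∈ Finset.Icc 1 (d - 1), h := by simp
    _ ≤ ∑ j ∈ Finset.Icc 1 (d - 1), ((D j).card +
        ∑ i ∈ Finset.Icc (l + 1) h, ((B i).filter (fun x => G.dist u x = j)).card) :=
      Finset.sum_le_sum hlayer
    _ = ∑ j ∈ Finset.Icc 1 (d - 1), (D j).card + ∑ i ∈ Finset.Icc (l + 1) h,
        ∑ j ∈ Finset.Icc 1 (d - 1), ((B i).filter (fun x => G.dist u x = j)).card := by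
      rw [Finset.sum_add_distrib, Finset.sum_comm]
    _ ≤ s - 2 + ∑ i ∈ Finset.Icc (l + 1) h, bOf s r w i := by
      refine Nat.add_le_add hDsum (Finset.sum_le_sum fun i hi => ?_)
      rw [← hBcard i (Finset.mem_Icc.mp hi).2, Finset.sum_card_fiberwise_eq_card_filter]
      exact Finset.card_le_card (Finset.filter_subset _ _)
end

section
/- Let k be a field, m ≥ 1, and in S = k[x_1,…,x_{2m}] consider the monomial ideal J = ( x_i x_{m+k} : 1 ≤ i < k ≤ m ). Then J admits the primary decomposition J = ⋂_{k=1}^{m} (x_1,…,x_{k-1}, x_{m+k+1},…,x_{2m}); in particular the minimal primes of J are exactly the prime ideals p_k = (x_1,…,x_{k-1}, x_{m+k+1},…,x_{2m}) for k = 1,…,m. -/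
/-- In `S = k[x_1, …, x_{2m}]`, realized as `MvPolynomial (Fin m ⊕ Fin m) k` with
`x_i = X (Sum.inl (i-1))` for `1 ≤ i ≤ m` and `x_{m+j} = X (Sum.inr (j-1))` for
`1 ≤ j ≤ m`, the monomial ideal `J = (x_i x_{m+j} : 1 ≤ i < j ≤ m)`. -/
noncomputable def Jideal (k : Type*) [Field k] (m : ℕ) :
    Ideal (MvPolynomial (Fin m ⊕ Fin m) k) :=
  Ideal.span {q | ∃ i j : Fin m, i < j ∧
    q = MvPolynomial.X (Sum.inl i) * MvPolynomial.X (Sum.inr j)}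

/-- The prime ideal `p_t = (x_1, …, x_{t-1}, x_{m+t+1}, …, x_{2m})`, i.e. generated by
the variables `X (Sum.inl i)` for `i < t` together with `X (Sum.inr j)` for `j > t`
(zero-based indexing `t : Fin m`). -/
noncomputable def pIdeal (k : Type*) [Field k] (m : ℕ) (t : Fin m) :
    Ideal (MvPolynomial (Fin m ⊕ Fin m) k) :=
  Ideal.span ({q | ∃ i : Fin m, i < t ∧ q = MvPolynomial.X (Sum.inl i)} ∪
    {q | ∃ j : Fin m, t < j ∧ q = MvPolynomial.X (Sum.inr j)})

open MvPolynomial in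
theorem span_X_image_isPrime_aux {σ k : Type*} [Field k] (s : Set σ) :
    (Ideal.span ((X : σ → MvPolynomial σ k) '' s)).IsPrime := by
  classical
  let φ : MvPolynomial σ k →ₐ[k] MvPolynomial σ k :=
    aeval (fun v => if v ∈ s then 0 else X v)
  have key : ∀ f : MvPolynomial σ k, f - φ f ∈ Ideal.span ((X : σ → MvPolynomial σ k) '' s) := by
    intro f
    induction f using MvPolynomial.induction_on with
    | C a => simp [φ]
    | add p q hp hq =>
      rw [map_add, add_sub_add_comm]
      exact Ideal.add_mem _ hp hq
    | mul_X p v hp =>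
      by_cases hv : v ∈ s
      · have : φ (X v) = 0 := by simp [φ, hv]
        rw [map_mul, this, mul_zero, sub_zero]
        exact Ideal.mul_mem_left _ _ (Ideal.subset_span ⟨v, hv, rfl⟩)
      · have : φ (X v) = X v := by simp [φ, hv]
        rw [map_mul, this, ← sub_mul]
        exact Ideal.mul_mem_right _ _ hp
  have : Ideal.span ((X : σ → MvPolynomial σ k) '' s) = RingHom.ker φ := by
    apply le_antisymm
    · rw [Ideal.span_le]
      rintro _ ⟨v, hv, rfl⟩
      simp [φ, RingHom.mem_ker, hv]
    · intro f hf
      have h := key f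
      rwa [(RingHom.mem_ker).1 hf, sub_zero] at h
  rw [this]
  exact RingHom.ker_isPrime _

/-- Index set of the variables generating `p_t`. -/
def pVars (m : ℕ) (t : Fin m) : Set (Fin m ⊕ Fin m) :=
  {v | (∃ i, i < t ∧ v = Sum.inl i) ∨ ∃ j, t < j ∧ v = Sum.inr j}

theorem pIdeal_eq_span_image (k : Type*) [Field k] (m : ℕ) (t : Fin m) :
    pIdeal k m t = Ideal.span
      ((MvPolynomial.X : _ → MvPolynomial (Fin m ⊕ Fin m) k) '' pVars m t) := by
  unfold pIdeal
  congr 1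
  ext q
  constructor
  · rintro (⟨i, hi, rfl⟩ | ⟨i, hi, rfl⟩)
    · exact ⟨_, Or.inl ⟨i, hi, rfl⟩, rfl⟩
    · exact ⟨_, Or.inr ⟨i, hi, rfl⟩, rfl⟩
  · rintro ⟨_, (⟨i, hi, rfl⟩ | ⟨i, hi, rfl⟩), rfl⟩
    · exact Or.inl ⟨i, hi, rfl⟩
    · exact Or.inr ⟨i, hi, rfl⟩

theorem pIdeal_isPrime_aux (k : Type*) [Field k] (m : ℕ) (t : Fin m) :
    (pIdeal k m t).IsPrime := by
  rw [pIdeal_eq_span_image]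
  exact span_X_image_isPrime_aux _

theorem X_mem_pIdeal_aux (k : Type*) [Field k] (m : ℕ) (t : Fin m) (v : Fin m ⊕ Fin m) :
    (MvPolynomial.X v : MvPolynomial (Fin m ⊕ Fin m) k) ∈ pIdeal k m t ↔ v ∈ pVars m t := by
  classical
  rw [pIdeal_eq_span_image, MvPolynomial.mem_ideal_span_X_image]
  constructor
  · intro h
    obtain ⟨i, hi, h0⟩ := h (Finsupp.single v 1) (by simp [MvPolynomial.support_X])
    rw [Finsupp.single_apply] at h0
    split_ifs at h0 with e
    · exact e ▸ hi
    · exact absurd rfl h0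
  · intro h d hd
    rw [MvPolynomial.support_X, Finset.mem_singleton] at hd
    exact ⟨v, h, by simp [hd]⟩

theorem pIdeal_antichain_aux (k : Type*) [Field k] (m : ℕ) (s t : Fin m)
    (h : pIdeal k m s ≤ pIdeal k m t) : s = t := by
  rcases lt_trichotomy s t with hl | hl | hl
  · have := (X_mem_pIdeal_aux k m t (Sum.inr t)).1
      (h ((X_mem_pIdeal_aux k m s (Sum.inr t)).2 (Or.inr ⟨t, hl, rfl⟩)))
    simp [pVars] at this
  · exact hl
  · have := (X_mem_pIdeal_aux k m t (Sum.inl t)).1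
      (h ((X_mem_pIdeal_aux k m s (Sum.inl t)).2 (Or.inl ⟨t, hl, rfl⟩)))
    simp [pVars] at this

theorem Jideal_eq_span_monomial (k : Type*) [Field k] (m : ℕ) :
    Jideal k m = Ideal.span ((fun d => MvPolynomial.monomial d (1 : k)) ''
      {d : Fin m ⊕ Fin m →₀ ℕ | ∃ i j : Fin m, i < j ∧
        d = Finsupp.single (Sum.inl i) 1 + Finsupp.single (Sum.inr j) 1}) := by
  have e : ∀ i j : Fin m, MvPolynomial.monomial
      (Finsupp.single (Sum.inl i) 1 + Finsupp.single (Sum.inr j) 1) (1 : k) =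
      MvPolynomial.X (Sum.inl i) * MvPolynomial.X (Sum.inr j) := by
    intro i j
    simp [MvPolynomial.X, MvPolynomial.monomial_mul]
  unfold Jideal
  congr 1
  ext q
  constructor
  · rintro ⟨i, j, hij, rfl⟩
    exact ⟨_, ⟨i, j, hij, rfl⟩, e i j⟩
  · rintro ⟨_, ⟨i, j, hij, rfl⟩, rfl⟩
    exact ⟨i, j, hij, e i j⟩

theorem Jideal_eq_iInf_aux (k : Type*) [Field k] (m : ℕ) (hm : 1 ≤ m) :
    Jideal k m = ⨅ t : Fin m, pIdeal k m t := by
  classical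
  apply le_antisymm
  · refine le_iInf fun t => ?_
    unfold Jideal
    rw [Ideal.span_le]
    rintro _ ⟨i, j, hij, rfl⟩
    rcases lt_or_ge i t with h | h
    · exact Ideal.mul_mem_right _ _ ((X_mem_pIdeal_aux k m t _).2 (Or.inl ⟨i, h, rfl⟩))
    · exact Ideal.mul_mem_left _ _
        ((X_mem_pIdeal_aux k m t _).2 (Or.inr ⟨j, lt_of_le_of_lt h hij, rfl⟩))
  · intro f hf
    rw [Jideal_eq_span_monomial, MvPolynomial.mem_ideal_span_monomial_image]
    intro d hd
    have H : ∀ t : Fin m, ∃ v ∈ pVars m t, d v ≠ 0 := by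
      intro t
      have := (Ideal.mem_iInf.1 hf) t
      rw [pIdeal_eq_span_image, MvPolynomial.mem_ideal_span_X_image] at this
      exact this d hd
    have hne : ∃ i : Fin m, d (Sum.inl i) ≠ 0 := by
      obtain ⟨v, (⟨i, _, rfl⟩ | ⟨j, hj, rfl⟩), hv⟩ := H ⟨m - 1, by omega⟩
      · exact ⟨i, hv⟩
      · have := Fin.lt_def.1 hj
        simp only at this
        omega
    obtain ⟨i, hi, hmin⟩ := WellFounded.has_min (wellFounded_lt (α := Fin m))
      {i | d (Sum.inl i) ≠ 0} hne
    obtain ⟨v, (⟨i', hi', rfl⟩ | ⟨j, hj, rfl⟩), hv⟩ := H i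
    · exact absurd hi' (hmin i' hv)
    · refine ⟨_, ⟨i, j, hj, rfl⟩, ?_⟩
      have hi1 : d (Sum.inl i) ≠ 0 := hi
      intro w
      rcases w with a | a
      · simp only [Finsupp.add_apply, Finsupp.single_apply]
        by_cases h : i = a
        · subst h; simp; omega
        · simp [h]
      · simp only [Finsupp.add_apply, Finsupp.single_apply]
        by_cases h : j = a
        · subst h; simp; omega
        · simp [h]

/-- For `m ≥ 1`, the ideal `J = (x_i x_{m+j} : 1 ≤ i < j ≤ m)` of
`k[x_1, …, x_{2m}]` admits the primary decomposition `J = ⋂_{t=1}^m p_t`, and its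
minimal primes are exactly the `p_t`. -/
theorem Jideal_decomposition {k : Type*} [Field k] (m : ℕ) (hm : 1 ≤ m) :
    (Jideal k m = ⨅ t : Fin m, pIdeal k m t) ∧
      (Jideal k m).minimalPrimes = Set.range (pIdeal k m) := by
  refine ⟨Jideal_eq_iInf_aux k m hm, ?_⟩
  have hJ := Jideal_eq_iInf_aux k m hm
  have hle : ∀ t, Jideal k m ≤ pIdeal k m t := fun t => hJ ▸ iInf_le _ t
  have hex : ∀ P : Ideal (MvPolynomial (Fin m ⊕ Fin m) k), P.IsPrime → Jideal k m ≤ P →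
      ∃ t, pIdeal k m t ≤ P := by
    intro P hP h
    rw [hJ, ← Finset.inf_univ_eq_iInf] at h
    obtain ⟨t, _, ht⟩ := (Ideal.IsPrime.inf_le' hP).1 h
    exact ⟨t, ht⟩
  ext P
  constructor
  · rintro ⟨⟨hP, hJP⟩, hmin⟩
    obtain ⟨t, ht⟩ := hex P hP hJP
    exact ⟨t, le_antisymm ht (hmin ⟨pIdeal_isPrime_aux k m t, hle t⟩ ht)⟩
  · rintro ⟨t, rfl⟩
    refine ⟨⟨pIdeal_isPrime_aux k m t, hle t⟩, ?_⟩
    rintro Q ⟨hQ, hJQ⟩ hQt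
    obtain ⟨s, hs⟩ := hex Q hQ hJQ
    have := pIdeal_antichain_aux k m s t (hs.trans hQt)
    exact this ▸ hs
end
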